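/- arXiv:2006.08382 — 7 statements merged into one kernel-verified Lean document; each statement's English description precedes it below -/
import Mathlib

section
/- There exists a constant L ≥ 0, depending only on φ, such that for all a, b ∈ ℝ³ one has (f(a) − f(b))·(a − b) ≥ −L |a − b|². (This is the semi-monotonicity property, expressing that the Jacobian of f is bounded below by −L, used in the uniqueness proof for the Brinkman–Forchheimer system.) -/
open scoped RealInnerProductSpace

/-!
The inner product `⟪p • a - q • b, a - b⟫` splits into a radial part
`(p * ‖a‖ - q * ‖b‖) * (‖a‖ - ‖b‖)` and a tangential part `(p + q) * (‖a‖ * ‖b‖ - ⟪a, b⟫)`.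
With `c = m - C ^ 2 / (2 * K)` and weights `φ (r ^ 2) - c`, the tangential part is nonnegative
because `c ≤ m ≤ φ`, and the radial part because the profile `r ↦ (φ (r ^ 2) - c) * r` has
derivative `φ (r ^ 2) - c + 2 * r ^ 2 * φ' (r ^ 2)`, in which the last term is at least
`2 * K * r ^ 2 - 2 * C * r ≥ -C ^ 2 / (2 * K)`.
-/

section RadialField

variable {E : Type*} [NormedAddCommGroup E] [InnerProductSpace ℝ E]

theorem inner_smul_sub_smul_eq_radial_add_tangential (p q : ℝ) (a b : E) :
    ⟪p • a - q • b, a - b⟫ =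
      (p * ‖a‖ - q * ‖b‖) * (‖a‖ - ‖b‖) + (p + q) * (‖a‖ * ‖b‖ - ⟪a, b⟫) := by
  simp only [inner_sub_left, inner_sub_right, real_inner_smul_left,
    real_inner_self_eq_norm_sq, real_inner_comm a b]
  ring

theorem inner_smul_norm_sub_smul_norm_nonneg {w : ℝ → ℝ} (hw : ∀ r, 0 < r → 0 ≤ w r)
    (hmono : MonotoneOn (fun r => w r * r) (Set.Ioi 0)) (a b : E) :
    0 ≤ ⟪w ‖a‖ • a - w ‖b‖ • b, a - b⟫ := by
  have inner_smul_self_nonneg (u : E) (hu : u ≠ 0) : 0 ≤ ⟪w ‖u‖ • u, u⟫ := by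
    rw [real_inner_smul_left]
    exact mul_nonneg (hw _ (norm_pos_iff.mpr hu)) real_inner_self_nonneg
  rcases eq_or_ne a 0 with rfl | ha
  · rcases eq_or_ne b 0 with rfl | hb
    · simp
    · simpa using inner_smul_self_nonneg b hb
  rcases eq_or_ne b 0 with rfl | hb
  · simpa using inner_smul_self_nonneg a ha
  have ha_pos : 0 < ‖a‖ := norm_pos_iff.mpr ha
  have hb_pos : 0 < ‖b‖ := norm_pos_iff.mpr hb
  rw [inner_smul_sub_smul_eq_radial_add_tangential]
  have radial_nonneg : 0 ≤ (w ‖a‖ * ‖a‖ - w ‖b‖ * ‖b‖) * (‖a‖ - ‖b‖) :=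
    monovaryOn_iff_forall_mul_nonneg.mp (monovaryOn_id_iff.mpr hmono) hb_pos ha_pos
  have tangential_nonneg : 0 ≤ (w ‖a‖ + w ‖b‖) * (‖a‖ * ‖b‖ - ⟪a, b⟫) :=
    mul_nonneg (add_nonneg (hw _ ha_pos) (hw _ hb_pos)) (sub_nonneg.mpr (real_inner_le_norm a b))
  exact add_nonneg radial_nonneg tangential_nonneg

end RadialField

theorem hasDerivAt_comp_sq_mul_self {φ : ℝ → ℝ} {d r : ℝ} (h : HasDerivAt φ d (r ^ 2)) :
    HasDerivAt (fun s => φ (s ^ 2) * s) (φ (r ^ 2) + 2 * r ^ 2 * d) r := by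
  have hsq : HasDerivAt (fun s : ℝ => s ^ 2) (2 * r) r := by simpa using hasDerivAt_pow 2 r
  have hcomp : HasDerivAt (fun s => φ (s ^ 2)) (d * (2 * r)) r :=
    HasDerivAt.comp (h := fun s : ℝ => s ^ 2) r h hsq
  exact (hcomp.fun_mul (hasDerivAt_id' r)).congr_deriv (by ring)

theorem neg_sq_div_le_two_mul_sq_mul {K C r d : ℝ} (hK : 0 < K) (hr : r ≠ 0)
    (hd : K - C * r⁻¹ ≤ d) : -(C ^ 2 / (2 * K)) ≤ 2 * r ^ 2 * d :=
  calc
    -(C ^ 2 / (2 * K)) ≤ (2 * K * r - C) ^ 2 / (2 * K) - C ^ 2 / (2 * K) := by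
      linarith [show 0 ≤ (2 * K * r - C) ^ 2 / (2 * K) by positivity]
    _ = 2 * r ^ 2 * (K - C * r⁻¹) := by field_simp; ring
    _ ≤ 2 * r ^ 2 * d := by gcongr

theorem sq_rpow_neg_one_div_two {r : ℝ} (hr : 0 ≤ r) : (r ^ 2) ^ (-(1 : ℝ) / 2) = r⁻¹ := by
  rw [neg_div, Real.rpow_neg (sq_nonneg r), ← Real.sqrt_eq_rpow, Real.sqrt_sq hr]

theorem monotoneOn_comp_sq_sub_mul_self {φ φ' : ℝ → ℝ} {K C m : ℝ} (hK : 0 < K)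
    (hderiv : ∀ z ∈ Set.Ioi (0 : ℝ), HasDerivAt φ (φ' z) z)
    (hφ' : ∀ z ∈ Set.Ioi (0 : ℝ), K - C * z ^ (-(1 : ℝ) / 2) ≤ φ' z)
    (hφ : ∀ z ∈ Set.Ioi (0 : ℝ), m ≤ φ z) :
    MonotoneOn (fun r => (φ (r ^ 2) - (m - C ^ 2 / (2 * K))) * r) (Set.Ioi 0) := by
  have sq_mem {r : ℝ} (hr : r ∈ Set.Ioi 0) : r ^ 2 ∈ Set.Ioi 0 := pow_pos hr 2
  set c := m - C ^ 2 / (2 * K)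
  have hprofile (r : ℝ) (hr : r ∈ Set.Ioi 0) :
      HasDerivAt (fun s => (φ (s ^ 2) - c) * s) (φ (r ^ 2) - c + 2 * r ^ 2 * φ' (r ^ 2)) r :=
    hasDerivAt_comp_sq_mul_self ((hderiv _ (sq_mem hr)).sub_const c)
  refine monotoneOn_of_hasDerivWithinAt_nonneg (convex_Ioi 0)
    (fun r hr => (hprofile r hr).continuousAt.continuousWithinAt)
    (fun r hr => (hprofile r (interior_subset hr)).hasDerivWithinAt) fun r hr => ?_
  have hr_pos : 0 < r := interior_subset hr
  have hslope : K - C * r⁻¹ ≤ φ' (r ^ 2) := by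
    simpa only [sq_rpow_neg_one_div_two hr_pos.le] using hφ' _ (sq_mem hr_pos)
  linarith [hφ _ (sq_mem hr_pos), neg_sq_div_le_two_mul_sq_mul hK hr_pos.ne' hslope]

theorem stmt_0_general {E : Type*} [NormedAddCommGroup E] [InnerProductSpace ℝ E]
    {φ φ' : ℝ → ℝ} {K C m : ℝ} (hK : 0 < K)
    (hderiv : ∀ z ∈ Set.Ioi (0 : ℝ), HasDerivAt φ (φ' z) z)
    (hφ' : ∀ z ∈ Set.Ioi (0 : ℝ), K - C * z ^ (-(1 : ℝ) / 2) ≤ φ' z)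
    (hφ : ∀ z ∈ Set.Ioi (0 : ℝ), m ≤ φ z) (a b : E) :
    (m - C ^ 2 / (2 * K)) * ‖a - b‖ ^ 2 ≤
      ⟪φ (‖a‖ ^ 2) • a - φ (‖b‖ ^ 2) • b, a - b⟫ := by
  set c := m - C ^ 2 / (2 * K)
  have weight_nonneg (r : ℝ) (hr : 0 < r) : 0 ≤ φ (r ^ 2) - c := by
    have : 0 ≤ C ^ 2 / (2 * K) := by positivity
    linarith [hφ _ (pow_pos hr 2)]
  have shifted_nonneg : 0 ≤ ⟪(φ (‖a‖ ^ 2) - c) • a - (φ (‖b‖ ^ 2) - c) • b, a - b⟫ :=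
    inner_smul_norm_sub_smul_norm_nonneg weight_nonneg
      (monotoneOn_comp_sq_sub_mul_self hK hderiv hφ' hφ) a b
  have shift : (φ (‖a‖ ^ 2) - c) • a - (φ (‖b‖ ^ 2) - c) • b =
      (φ (‖a‖ ^ 2) • a - φ (‖b‖ ^ 2) • b) - c • (a - b) := by
    module
  rw [shift, inner_sub_left, real_inner_smul_left, real_inner_self_eq_norm_sq] at shifted_nonneg
  exact sub_nonneg.mp shifted_nonneg

/-- Semi-monotonicity of the Forchheimer nonlinearity `f(u) = φ(|u|²)u`:
there is `L ≥ 0`, depending only on `φ`, with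
`(f(a) - f(b))·(a - b) ≥ -L |a - b|²` for all `a, b ∈ ℝ³`. -/
theorem stmt_0
    (l : ℝ) (hl : l ∈ Set.Ioc (0:ℝ) 2)
    (φ φ' : ℝ → ℝ)
    (hderiv : ∀ z ∈ Set.Ioi (0:ℝ), HasDerivAt φ (φ' z) z)
    (hφ'cont : ContinuousOn φ' (Set.Ioi 0))
    (α K C C₁ : ℝ) (hα : 0 < α) (hK : 0 < K) (hC : 0 < C) (hC₁ : 0 < C₁)
    (hφ'lb : ∀ z ∈ Set.Ioi (0:ℝ), K - C * z ^ (-(1:ℝ)/2) ≤ φ' z)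
    (hφ'ub : ∀ z ∈ Set.Ioi (0:ℝ), φ' z ≤ C₁ * z ^ (-(1:ℝ)/2) * (1 + z ^ ((3:ℝ)/2)))
    (hφlb : ∀ z ∈ Set.Ioi (0:ℝ), -C + α * z ^ l ≤ φ z)
    (hφub : ∀ z ∈ Set.Ioi (0:ℝ), φ z ≤ C * (1 + z ^ l))
    (f : EuclideanSpace ℝ (Fin 3) → EuclideanSpace ℝ (Fin 3))
    (hf : ∀ u : EuclideanSpace ℝ (Fin 3), u ≠ 0 → f u = φ (‖u‖ ^ 2) • u)
    (hf0 : f 0 = 0) :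
    ∃ L : ℝ, 0 ≤ L ∧ ∀ a b : EuclideanSpace ℝ (Fin 3),
      ⟪f a - f b, a - b⟫ ≥ -L * ‖a - b‖ ^ 2 := by
  have hφ_ge : ∀ z ∈ Set.Ioi (0 : ℝ), -C ≤ φ z := fun z hz => by
    have : 0 ≤ α * z ^ l := mul_nonneg hα.le (Real.rpow_nonneg (le_of_lt hz) l)
    linarith [hφlb z hz]
  have hf_eq (u : EuclideanSpace ℝ (Fin 3)) : f u = φ (‖u‖ ^ 2) • u := by
    rcases eq_or_ne u 0 with rfl | hu
    · rw [hf0, smul_zero]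
    · exact hf u hu
  refine ⟨C + C ^ 2 / (2 * K), by positivity, fun a b => ?_⟩
  rw [hf_eq a, hf_eq b, neg_add']
  exact stmt_0_general hK hderiv hφ'lb hφ_ge a b
end

section
/- There exists a constant C′ > 0, depending only on φ, l and D, such that |f(u)|^{6/5} ≤ C′ ( |f(u)·Du| + 1 ) for all u ∈ ℝ³. (This inequality is the key pointwise step used to control the term (f(u), 𝔅p) in the derivation of the basic dissipative energy estimate.) -/
/-!
Write `r = ‖u‖` and `P = |φ(r²)|`, so that `‖f u‖ = P r`, while coercivity of `A` with constant `c`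
gives `c P r² ≤ |⟪f u, A u⟫|`. For `r ≤ 1` the growth bound on `φ` yields `P r ≤ 2C`. For `1 ≤ r` it
yields `P r ≤ 2C r^(2l+1)`, and as soon as `(p - 1)(2l + 1) ≤ 1` the surplus factor `(P r)^(p-1)` of
`(P r)^p` is at most `(2C)^(p-1) r`. For `l = 2` the largest such exponent is `p = 6/5`. A positive
definite matrix is coercive because its quadratic form attains its minimum on the unit sphere.
-/

open scoped RealInnerProductSpace

section Coercivity

lemma exists_pos_mul_norm_sq_le_inner {E : Type*} [NormedAddCommGroup E] [InnerProductSpace ℝ E]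
    [FiniteDimensional ℝ E] (A : E →ₗ[ℝ] E) (hA : ∀ u ≠ 0, 0 < ⟪u, A u⟫) :
    ∃ c : ℝ, 0 < c ∧ ∀ u, c * ‖u‖ ^ 2 ≤ ⟪u, A u⟫ := by
  have quadraticForm_continuous : Continuous fun u => ⟪u, A u⟫ :=
    continuous_id.inner A.continuous_of_finiteDimensional
  have pos_on_sphere : ∀ u ∈ Metric.sphere (0 : E) 1, 0 < ⟪u, A u⟫ := fun u hu =>
    hA u (ne_zero_of_mem_unit_sphere ⟨u, hu⟩)
  obtain ⟨c, hc, hmin⟩ := (isCompact_sphere (0 : E) 1).exists_forall_le'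
    quadraticForm_continuous.continuousOn pos_on_sphere
  refine ⟨c, hc, fun u => ?_⟩
  obtain rfl | hu := eq_or_ne u 0
  · simp
  have hunit : ‖u‖⁻¹ • u ∈ Metric.sphere (0 : E) 1 := by
    simp [norm_smul, norm_ne_zero_iff.mpr hu]
  calc c * ‖u‖ ^ 2 ≤ ⟪‖u‖⁻¹ • u, A (‖u‖⁻¹ • u)⟫ * ‖u‖ ^ 2 := by gcongr; exact hmin _ hunit
    _ = ⟪u, A u⟫ := by
      rw [map_smul, real_inner_smul_left, real_inner_smul_right]
      field_simp [norm_ne_zero_iff.mpr hu]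

lemma inner_toEuclideanLin_pos_of_posDef {ι : Type*} [Fintype ι] [DecidableEq ι]
    {D : Matrix ι ι ℝ} (hD : D.PosDef) {u : EuclideanSpace ℝ ι} (hu : u ≠ 0) :
    0 < ⟪u, Matrix.toEuclideanLin D u⟫ := by
  rw [EuclideanSpace.inner_eq_star_dotProduct, dotProduct_comm]
  simpa using hD.dotProduct_mulVec_pos (x := u.ofLp) (by simpa using hu)

end Coercivity

section Growth

lemma rpow_le_mul_of_le_mul_rpow {x r M s p : ℝ} (hx : 0 ≤ x) (hr : 1 ≤ r) (hM : 0 ≤ M)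
    (hp : 1 ≤ p) (hps : (p - 1) * s ≤ 1) (hxr : x ≤ M * r ^ s) :
    x ^ p ≤ M ^ (p - 1) * (x * r) := by
  have hr₀ : 0 ≤ r := zero_le_one.trans hr
  have surplus_le : x ^ (p - 1) ≤ M ^ (p - 1) * r :=
    calc x ^ (p - 1) ≤ (M * r ^ s) ^ (p - 1) := Real.rpow_le_rpow hx hxr (sub_nonneg.mpr hp)
      _ = M ^ (p - 1) * r ^ ((p - 1) * s) := by
        rw [Real.mul_rpow hM (Real.rpow_nonneg hr₀ s), ← Real.rpow_mul hr₀, mul_comm s]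
      _ ≤ M ^ (p - 1) * r := by
        gcongr
        exact Real.rpow_le_self_of_one_le hr hps
  calc x ^ p = x ^ (p - 1) * x := by
        rw [← Real.rpow_add_one' hx (by linarith), sub_add_cancel]
    _ ≤ M ^ (p - 1) * r * x := by gcongr
    _ = M ^ (p - 1) * (x * r) := by ring

variable {P r l p C : ℝ}

lemma mul_le_two_mul_of_le_one (hP : 0 ≤ P) (hr₀ : 0 ≤ r) (hr : r ≤ 1) (hl : 0 ≤ l) (hC : 0 ≤ C)
    (hPr : P ≤ C * (1 + (r ^ 2) ^ l)) : P * r ≤ 2 * C := by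
  have hrl : (r ^ 2) ^ l ≤ 1 := Real.rpow_le_one (sq_nonneg r) (pow_le_one₀ hr₀ hr) hl
  calc P * r ≤ P := mul_le_of_le_one_right hP hr
    _ ≤ C * (1 + 1) := hPr.trans (by gcongr)
    _ = 2 * C := by ring

lemma mul_le_two_mul_rpow_of_one_le (hr : 1 ≤ r) (hl : 0 ≤ l) (hC : 0 ≤ C)
    (hPr : P ≤ C * (1 + (r ^ 2) ^ l)) : P * r ≤ 2 * C * r ^ (2 * l + 1) := by
  have hr₀ : 0 ≤ r := zero_le_one.trans hr
  have hrl : 1 ≤ (r ^ 2) ^ l := Real.one_le_rpow (one_le_pow₀ hr) hl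
  calc P * r ≤ C * ((r ^ 2) ^ l + (r ^ 2) ^ l) * r := by
        gcongr
        exact hPr.trans (by gcongr)
    _ = 2 * C * ((r ^ 2) ^ l * r) := by ring
    _ = 2 * C * r ^ (2 * l + 1) := by
        rw [← Real.rpow_natCast_mul hr₀, Real.rpow_add_one' hr₀ (by linarith), Nat.cast_ofNat]

lemma mul_rpow_le_of_growth (hP : 0 ≤ P) (hr : 0 ≤ r) (hl : 0 ≤ l) (hC : 0 ≤ C) (hp : 1 ≤ p)
    (hpl : (p - 1) * (2 * l + 1) ≤ 1) (hPr : P ≤ C * (1 + (r ^ 2) ^ l)) :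
    (P * r) ^ p ≤ (2 * C) ^ p + (2 * C) ^ (p - 1) * (P * r ^ 2) := by
  have hPr₀ : 0 ≤ P * r := mul_nonneg hP hr
  obtain hr₁ | hr₁ := le_total r 1
  · calc (P * r) ^ p ≤ (2 * C) ^ p :=
          Real.rpow_le_rpow hPr₀ (mul_le_two_mul_of_le_one hP hr hr₁ hl hC hPr) (by linarith)
      _ ≤ _ := le_add_of_nonneg_right (by positivity)
  · calc (P * r) ^ p ≤ (2 * C) ^ (p - 1) * (P * r * r) :=
          rpow_le_mul_of_le_mul_rpow hPr₀ hr₁ (by positivity) hp hpl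
            (mul_le_two_mul_rpow_of_one_le hr₁ hl hC hPr)
      _ = (2 * C) ^ (p - 1) * (P * r ^ 2) := by ring
      _ ≤ _ := le_add_of_nonneg_left (by positivity)

end Growth

theorem stmt_1_general {E : Type*} [NormedAddCommGroup E] [InnerProductSpace ℝ E]
    {l p c C : ℝ} (hl : 0 ≤ l) (hp : 1 ≤ p) (hpl : (p - 1) * (2 * l + 1) ≤ 1) (hc : 0 < c)
    {φ : ℝ → ℝ} (hφ : ∀ z > 0, |φ z| ≤ C * (1 + z ^ l))
    {f A : E → E} (hf : ∀ u, f u = φ (‖u‖ ^ 2) • u) (hA : ∀ u, c * ‖u‖ ^ 2 ≤ ⟪u, A u⟫) :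
    ∃ C' : ℝ, 0 < C' ∧ ∀ u, ‖f u‖ ^ p ≤ C' * (|⟪f u, A u⟫| + 1) := by
  have hC : 0 ≤ C := by
    have h := (abs_nonneg _).trans (hφ 1 one_pos)
    rw [Real.one_rpow] at h
    linarith
  set a := (2 * C) ^ (p - 1) / c
  set b := (2 * C) ^ p
  have ha : 0 ≤ a := by positivity
  have hb : 0 ≤ b := by positivity
  refine ⟨a + b + 1, by positivity, fun u => ?_⟩
  obtain rfl | hu := eq_or_ne u 0
  · rw [hf, smul_zero, norm_zero, Real.zero_rpow (by linarith)]
    positivity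
  have coercive : c * (|φ (‖u‖ ^ 2)| * ‖u‖ ^ 2) ≤ |⟪f u, A u⟫| :=
    calc c * (|φ (‖u‖ ^ 2)| * ‖u‖ ^ 2) = |φ (‖u‖ ^ 2)| * (c * ‖u‖ ^ 2) := by ring
      _ ≤ |φ (‖u‖ ^ 2)| * |⟪u, A u⟫| := by gcongr; exact (hA u).trans (le_abs_self _)
      _ = |⟪f u, A u⟫| := by rw [hf, real_inner_smul_left, abs_mul]
  calc ‖f u‖ ^ p = (|φ (‖u‖ ^ 2)| * ‖u‖) ^ p := by rw [hf, norm_smul, Real.norm_eq_abs]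
    _ ≤ b + (2 * C) ^ (p - 1) * (|φ (‖u‖ ^ 2)| * ‖u‖ ^ 2) :=
      mul_rpow_le_of_growth (abs_nonneg _) (norm_nonneg u) hl hC hp hpl (hφ _ (by positivity))
    _ = b + a * (c * (|φ (‖u‖ ^ 2)| * ‖u‖ ^ 2)) := by simp only [a]; field_simp
    _ ≤ b + a * |⟪f u, A u⟫| := by gcongr
    _ ≤ (a + b + 1) * (|⟪f u, A u⟫| + 1) := by
      nlinarith [mul_nonneg hb (abs_nonneg ⟪f u, A u⟫), abs_nonneg ⟪f u, A u⟫]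

/-- The pointwise inequality `|f(u)|^{6/5} ≤ C'(|f(u)·Du| + 1)` for the Forchheimer
nonlinearity `f(u) = φ(|u|²)u` and a symmetric positive definite matrix `D`. -/
theorem stmt_1
    (l : ℝ) (hl : l ∈ Set.Ioc (0:ℝ) 2)
    (φ φ' : ℝ → ℝ)
    (hderiv : ∀ z ∈ Set.Ioi (0:ℝ), HasDerivAt φ (φ' z) z)
    (hφ'cont : ContinuousOn φ' (Set.Ioi 0))
    (α K C C₁ : ℝ) (hα : 0 < α) (hK : 0 < K) (hC : 0 < C) (hC₁ : 0 < C₁)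
    (hφ'lb : ∀ z ∈ Set.Ioi (0:ℝ), K - C * z ^ (-(1:ℝ)/2) ≤ φ' z)
    (hφ'ub : ∀ z ∈ Set.Ioi (0:ℝ), φ' z ≤ C₁ * z ^ (-(1:ℝ)/2) * (1 + z ^ ((3:ℝ)/2)))
    (hφlb : ∀ z ∈ Set.Ioi (0:ℝ), -C + α * z ^ l ≤ φ z)
    (hφub : ∀ z ∈ Set.Ioi (0:ℝ), φ z ≤ C * (1 + z ^ l))
    (f : EuclideanSpace ℝ (Fin 3) → EuclideanSpace ℝ (Fin 3))
    (hf : ∀ u : EuclideanSpace ℝ (Fin 3), u ≠ 0 → f u = φ (‖u‖ ^ 2) • u)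
    (hf0 : f 0 = 0)
    (D : Matrix (Fin 3) (Fin 3) ℝ) (hDsymm : D.IsSymm) (hDpos : D.PosDef) :
    ∃ C' : ℝ, 0 < C' ∧ ∀ u : EuclideanSpace ℝ (Fin 3),
      ‖f u‖ ^ ((6:ℝ)/5) ≤ C' * (|⟪f u, Matrix.toEuclideanLin D u⟫| + 1) := by
  obtain ⟨c, hc, hcoercive⟩ := exists_pos_mul_norm_sq_le_inner (Matrix.toEuclideanLin D)
    fun _ => inner_toEuclideanLin_pos_of_posDef hDpos
  have hφ_abs : ∀ z > 0, |φ z| ≤ C * (1 + z ^ l) := fun z hz => by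
    have hzl : 0 < z ^ l := Real.rpow_pos_of_pos hz l
    refine abs_le.mpr ⟨?_, hφub z hz⟩
    linarith [hφlb z hz, mul_pos hα hzl, mul_pos hC hzl]
  have hf_all : ∀ u, f u = φ (‖u‖ ^ 2) • u := fun u => by
    obtain rfl | hu := eq_or_ne u 0
    · rw [hf0, smul_zero]
    · exact hf u hu
  exact stmt_1_general hl.1.le (by norm_num) (by linarith [hl.2]) hc hφ_abs hf_all hcoercive
end

section
/- There exists a constant C′ > 0, depending only on φ and l, such that |f(a) − f(b)| ≤ C′ (1 + |a|⁴ + |b|⁴) |a − b| for all a, b ∈ ℝ³. (This is the pointwise quartic-growth Lipschitz estimate behind the bound ‖f(u) − f(v)‖_{H^{−1+δ}} ≤ C(1 + ‖u‖_{H¹}⁴ + ‖v‖_{H¹}⁴)‖u − v‖_{L^s} used in the asymptotic regularity argument.) -/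
open scoped RealInnerProductSpace

/-!
In the radial variable, `g r = φ (r ^ 2)` has derivative `2 * r * φ' (r ^ 2)`, and the factor `r`
absorbs the singularity `z ^ (-1 / 2)` of `φ'`: `|g' r| ≤ M * (1 + r ^ p)`, with `p = 3` here.
By the mean value inequality this controls both the increments of `g` and, starting from `g 1`,
the growth of `g`. The splitting `g ‖a‖ • a - g ‖b‖ • b = g ‖a‖ • (a - b) + (g ‖a‖ - g ‖b‖) • b`
for `‖b‖ ≤ ‖a‖` then costs one more power of `‖a‖` in each term.
-/

lemma one_add_rpow_mul_self_le {p r : ℝ} (hp : 0 ≤ p) (hr : 0 ≤ r) :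
    (1 + r ^ p) * r ≤ 2 * (1 + r ^ (p + 1)) := by
  have hpow : r ^ p * r = r ^ (p + 1) := (Real.rpow_add_one' hr (by positivity)).symm
  have hpow_nonneg : 0 ≤ r ^ (p + 1) := Real.rpow_nonneg hr _
  have hself : r ≤ 1 + r ^ (p + 1) := by
    rcases le_total r 1 with h | h
    · linarith
    · linarith [Real.self_le_rpow_of_one_le h (by linarith : 1 ≤ p + 1)]
  linarith

lemma nonneg_of_norm_le_mul_one_add_rpow {F : Type*} [SeminormedAddCommGroup F] {g' : ℝ → F}
    {M p : ℝ} (hg' : ∀ r, 0 < r → ‖g' r‖ ≤ M * (1 + r ^ p)) : 0 ≤ M := by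
  have h := (norm_nonneg _).trans (hg' 1 one_pos)
  rw [Real.one_rpow] at h
  linarith

lemma norm_smul_sub_smul_le {𝕜 E : Type*} [NormedField 𝕜] [SeminormedAddCommGroup E]
    [NormedSpace 𝕜 E] (x y : 𝕜) (a b : E) :
    ‖x • a - y • b‖ ≤ ‖x‖ * ‖a - b‖ + ‖x - y‖ * ‖b‖ :=
  calc ‖x • a - y • b‖ = ‖x • (a - b) + (x - y) • b‖ := by congr 1; module
    _ ≤ ‖x • (a - b)‖ + ‖(x - y) • b‖ := norm_add_le _ _
    _ = ‖x‖ * ‖a - b‖ + ‖x - y‖ * ‖b‖ := by simp only [norm_smul]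

section DerivativeGrowth

variable {F : Type*} [NormedAddCommGroup F] [NormedSpace ℝ F] {g g' : ℝ → F} {M p : ℝ}

lemma norm_sub_le_of_norm_deriv_le_one_add_rpow (hp : 0 ≤ p)
    (hg : ∀ r, 0 < r → HasDerivAt g (g' r) r)
    (hg' : ∀ r, 0 < r → ‖g' r‖ ≤ M * (1 + r ^ p)) {s r : ℝ} (hs : 0 < s) (hsr : s ≤ r) :
    ‖g r - g s‖ ≤ M * (1 + r ^ p) * (r - s) := by
  have hM := nonneg_of_norm_le_mul_one_add_rpow hg'
  have hpos : ∀ t ∈ Set.Icc s r, 0 < t := fun t ht => hs.trans_le ht.1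
  have hbound : ∀ t ∈ Set.Icc s r, ‖g' t‖ ≤ M * (1 + r ^ p) := fun t ht =>
    calc ‖g' t‖ ≤ M * (1 + t ^ p) := hg' t (hpos t ht)
      _ ≤ M * (1 + r ^ p) := by
        gcongr
        exacts [(hpos t ht).le, ht.2]
  have hmv := (convex_Icc s r).norm_image_sub_le_of_norm_hasDerivWithin_le
    (fun t ht => (hg t (hpos t ht)).hasDerivWithinAt) hbound
    (Set.left_mem_Icc.2 hsr) (Set.right_mem_Icc.2 hsr)
  rwa [Real.norm_of_nonneg (sub_nonneg.2 hsr)] at hmv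

lemma norm_sub_mul_le_of_norm_deriv_le_one_add_rpow (hp : 0 ≤ p)
    (hg : ∀ r, 0 < r → HasDerivAt g (g' r) r)
    (hg' : ∀ r, 0 < r → ‖g' r‖ ≤ M * (1 + r ^ p)) {s r : ℝ} (hs : 0 ≤ s) (hsr : s ≤ r) :
    ‖g r - g s‖ * s ≤ 2 * M * (1 + r ^ (p + 1)) * (r - s) := by
  have hM := nonneg_of_norm_le_mul_one_add_rpow hg'
  have hr : 0 ≤ r := hs.trans hsr
  have hsub : 0 ≤ r - s := sub_nonneg.2 hsr
  rcases hs.eq_or_lt with rfl | hs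
  · rw [mul_zero]
    positivity
  calc ‖g r - g s‖ * s ≤ M * (1 + r ^ p) * (r - s) * r := by
        gcongr
        exact norm_sub_le_of_norm_deriv_le_one_add_rpow hp hg hg' hs hsr
    _ = M * ((1 + r ^ p) * r) * (r - s) := by ring
    _ ≤ M * (2 * (1 + r ^ (p + 1))) * (r - s) := by
        gcongr ?_ * _
        exact mul_le_mul_of_nonneg_left (one_add_rpow_mul_self_le hp hr) hM
    _ = 2 * M * (1 + r ^ (p + 1)) * (r - s) := by ring

lemma norm_le_of_norm_deriv_le_one_add_rpow (hp : 0 ≤ p)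
    (hg : ∀ r, 0 < r → HasDerivAt g (g' r) r)
    (hg' : ∀ r, 0 < r → ‖g' r‖ ≤ M * (1 + r ^ p)) {r : ℝ} (hr : 0 < r) :
    ‖g r‖ ≤ (‖g 1‖ + 2 * M) * (1 + r ^ (p + 1)) := by
  have hM := nonneg_of_norm_le_mul_one_add_rpow hg'
  have hone : 1 ≤ 1 + r ^ (p + 1) := le_add_of_nonneg_right (Real.rpow_nonneg hr.le _)
  have hincr : ‖g r - g 1‖ ≤ 2 * M * (1 + r ^ (p + 1)) := by
    rcases le_total r 1 with h | h
    · calc ‖g r - g 1‖ = ‖g 1 - g r‖ := norm_sub_rev _ _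
        _ ≤ M * (1 + 1 ^ p) * (1 - r) := norm_sub_le_of_norm_deriv_le_one_add_rpow hp hg hg' hr h
        _ = 2 * M * (1 - r) := by rw [Real.one_rpow]; ring
        _ ≤ 2 * M * (1 + r ^ (p + 1)) := by gcongr; linarith
    · calc ‖g r - g 1‖ ≤ M * (1 + r ^ p) * (r - 1) :=
            norm_sub_le_of_norm_deriv_le_one_add_rpow hp hg hg' one_pos h
        _ ≤ M * (1 + r ^ p) * r := by gcongr; linarith
        _ = M * ((1 + r ^ p) * r) := by ring
        _ ≤ M * (2 * (1 + r ^ (p + 1))) :=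
            mul_le_mul_of_nonneg_left (one_add_rpow_mul_self_le hp hr.le) hM
        _ = 2 * M * (1 + r ^ (p + 1)) := by ring
  calc ‖g r‖ ≤ ‖g 1‖ + ‖g r - g 1‖ := norm_le_norm_add_norm_sub' _ _
    _ ≤ ‖g 1‖ * (1 + r ^ (p + 1)) + 2 * M * (1 + r ^ (p + 1)) :=
      add_le_add (le_mul_of_one_le_right (norm_nonneg _) hone) hincr
    _ = (‖g 1‖ + 2 * M) * (1 + r ^ (p + 1)) := by ring

end DerivativeGrowth

section RadialMap

variable {E : Type*} [SeminormedAddCommGroup E] [NormedSpace ℝ E] {g g' : ℝ → ℝ} {M p : ℝ}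

lemma norm_radial_sub_le_of_norm_le (hp : 0 ≤ p)
    (hg : ∀ r, 0 < r → HasDerivAt g (g' r) r)
    (hg' : ∀ r, 0 < r → ‖g' r‖ ≤ M * (1 + r ^ p)) {a b : E} (hba : ‖b‖ ≤ ‖a‖) :
    ‖g ‖a‖ • a - g ‖b‖ • b‖ ≤ (‖g 1‖ + 4 * M) * (1 + ‖a‖ ^ (p + 1)) * ‖a - b‖ := by
  have hM : 0 ≤ M := nonneg_of_norm_le_mul_one_add_rpow hg'
  rcases (norm_nonneg a).eq_or_lt with ha | ha
  · have hb : ‖b‖ = 0 := le_antisymm (hba.trans ha.ge) (norm_nonneg b)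
    have hzero : ‖g ‖a‖ • a - g ‖b‖ • b‖ ≤ 0 := by
      simpa only [norm_smul, ← ha, hb, mul_zero, add_zero] using
        norm_sub_le (g ‖a‖ • a) (g ‖b‖ • b)
    exact hzero.trans (by positivity)
  have hincr : ‖g ‖a‖ - g ‖b‖‖ * ‖b‖ ≤ 2 * M * (1 + ‖a‖ ^ (p + 1)) * ‖a - b‖ :=
    calc ‖g ‖a‖ - g ‖b‖‖ * ‖b‖ ≤ 2 * M * (1 + ‖a‖ ^ (p + 1)) * (‖a‖ - ‖b‖) :=
          norm_sub_mul_le_of_norm_deriv_le_one_add_rpow hp hg hg' (norm_nonneg b) hba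
      _ ≤ 2 * M * (1 + ‖a‖ ^ (p + 1)) * ‖a - b‖ := by gcongr; exact norm_sub_norm_le a b
  calc ‖g ‖a‖ • a - g ‖b‖ • b‖ ≤ ‖g ‖a‖‖ * ‖a - b‖ + ‖g ‖a‖ - g ‖b‖‖ * ‖b‖ :=
        norm_smul_sub_smul_le _ _ a b
    _ ≤ (‖g 1‖ + 2 * M) * (1 + ‖a‖ ^ (p + 1)) * ‖a - b‖
          + 2 * M * (1 + ‖a‖ ^ (p + 1)) * ‖a - b‖ := by
        gcongr
        exact norm_le_of_norm_deriv_le_one_add_rpow hp hg hg' ha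
    _ = (‖g 1‖ + 4 * M) * (1 + ‖a‖ ^ (p + 1)) * ‖a - b‖ := by ring

lemma norm_radial_sub_le (hp : 0 ≤ p)
    (hg : ∀ r, 0 < r → HasDerivAt g (g' r) r)
    (hg' : ∀ r, 0 < r → ‖g' r‖ ≤ M * (1 + r ^ p)) (a b : E) :
    ‖g ‖a‖ • a - g ‖b‖ • b‖ ≤
      (‖g 1‖ + 4 * M) * (1 + ‖a‖ ^ (p + 1) + ‖b‖ ^ (p + 1)) * ‖a - b‖ := by
  have hM : 0 ≤ M := nonneg_of_norm_le_mul_one_add_rpow hg'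
  wlog hba : ‖b‖ ≤ ‖a‖ generalizing a b
  · rw [norm_sub_rev (g ‖a‖ • a), norm_sub_rev a, add_right_comm]
    exact this b a (le_of_not_ge hba)
  refine (norm_radial_sub_le_of_norm_le hp hg hg' hba).trans ?_
  gcongr _ * ?_ * _
  exact le_add_of_nonneg_right (Real.rpow_nonneg (norm_nonneg b) _)

end RadialMap

lemma hasDerivAt_comp_sq {φ : ℝ → ℝ} {d t : ℝ} (hφ : HasDerivAt φ d (t ^ 2)) :
    HasDerivAt (fun r => φ (r ^ 2)) (d * (2 * t)) t := by
  simpa [Function.comp_def] using hφ.comp (h := fun r : ℝ => r ^ 2) t (hasDerivAt_pow 2 t)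

lemma abs_mul_two_mul_le_of_abs_le_rpow_sq {d M p t : ℝ} (ht : 0 < t)
    (hd : |d| ≤ M * (t ^ 2) ^ (-(1 : ℝ) / 2) * (1 + (t ^ 2) ^ (p / 2))) :
    |d * (2 * t)| ≤ 2 * M * (1 + t ^ p) := by
  have hsq_rpow (q : ℝ) : (t ^ 2) ^ (q / 2) = t ^ q := by
    rw [← Real.rpow_natCast_mul ht.le, Nat.cast_ofNat, mul_div_cancel₀ q two_ne_zero]
  rw [hsq_rpow, hsq_rpow, Real.rpow_neg_one] at hd
  calc |d * (2 * t)| = |d| * (2 * t) := by rw [abs_mul, abs_of_pos (by positivity : 0 < 2 * t)]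
    _ ≤ M * t⁻¹ * (1 + t ^ p) * (2 * t) := by gcongr
    _ = 2 * M * (1 + t ^ p) := by field_simp

lemma abs_le_of_sub_mul_le_of_le_mul {x w v K C C₁ : ℝ} (hK : 0 ≤ K) (hC : 0 ≤ C) (hC₁ : 0 ≤ C₁)
    (hw : 0 ≤ w) (hv : 0 ≤ v) (hlb : K - C * w ≤ x) (hub : x ≤ C₁ * w * (1 + v)) :
    |x| ≤ (C + C₁) * w * (1 + v) := by
  have hCwv : 0 ≤ C * w * v := by positivity
  have hC₁wv : 0 ≤ C₁ * w * (1 + v) := by positivity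
  have hCw : 0 ≤ C * w := by positivity
  rw [abs_le]
  constructor <;> linarith

theorem stmt_4_general {E : Type*} [SeminormedAddCommGroup E] [NormedSpace ℝ E] {φ φ' : ℝ → ℝ}
    {M p : ℝ} (hp : 0 ≤ p) (hderiv : ∀ z, 0 < z → HasDerivAt φ (φ' z) z)
    (hφ' : ∀ z, 0 < z → |φ' z| ≤ M * z ^ (-(1 : ℝ) / 2) * (1 + z ^ (p / 2))) :
    ∃ C' : ℝ, 0 < C' ∧ ∀ a b : E, ‖φ (‖a‖ ^ 2) • a - φ (‖b‖ ^ 2) • b‖ ≤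
      C' * (1 + ‖a‖ ^ (p + 1) + ‖b‖ ^ (p + 1)) * ‖a - b‖ := by
  have hg' : ∀ t, 0 < t → ‖φ' (t ^ 2) * (2 * t)‖ ≤ 2 * M * (1 + t ^ p) :=
    fun t ht => abs_mul_two_mul_le_of_abs_le_rpow_sq ht (hφ' _ (pow_pos ht 2))
  have hM : 0 ≤ 2 * M := nonneg_of_norm_le_mul_one_add_rpow hg'
  refine ⟨‖φ (1 ^ 2)‖ + 4 * (2 * M) + 1, by positivity, fun a b => ?_⟩
  refine (norm_radial_sub_le hp (fun t ht => hasDerivAt_comp_sq (hderiv _ (pow_pos ht 2)))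
    hg' a b).trans ?_
  gcongr ?_ * _ * _
  exact le_add_of_nonneg_right zero_le_one

/-- Pointwise quartic-growth Lipschitz estimate:
`|f(a) - f(b)| ≤ C'(1 + |a|⁴ + |b|⁴)|a - b|` for all `a, b ∈ ℝ³`. -/
theorem stmt_4
    (l : ℝ) (hl : l ∈ Set.Ioc (0:ℝ) 2)
    (φ φ' : ℝ → ℝ)
    (hderiv : ∀ z ∈ Set.Ioi (0:ℝ), HasDerivAt φ (φ' z) z)
    (hφ'cont : ContinuousOn φ' (Set.Ioi 0))
    (α K C C₁ : ℝ) (hα : 0 < α) (hK : 0 < K) (hC : 0 < C) (hC₁ : 0 < C₁)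
    (hφ'lb : ∀ z ∈ Set.Ioi (0:ℝ), K - C * z ^ (-(1:ℝ)/2) ≤ φ' z)
    (hφ'ub : ∀ z ∈ Set.Ioi (0:ℝ), φ' z ≤ C₁ * z ^ (-(1:ℝ)/2) * (1 + z ^ ((3:ℝ)/2)))
    (hφlb : ∀ z ∈ Set.Ioi (0:ℝ), -C + α * z ^ l ≤ φ z)
    (hφub : ∀ z ∈ Set.Ioi (0:ℝ), φ z ≤ C * (1 + z ^ l))
    (f : EuclideanSpace ℝ (Fin 3) → EuclideanSpace ℝ (Fin 3))
    (hf : ∀ u : EuclideanSpace ℝ (Fin 3), u ≠ 0 → f u = φ (‖u‖ ^ 2) • u)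
    (hf0 : f 0 = 0) :
    ∃ C' : ℝ, 0 < C' ∧ ∀ a b : EuclideanSpace ℝ (Fin 3),
      ‖f a - f b‖ ≤ C' * (1 + ‖a‖ ^ 4 + ‖b‖ ^ 4) * ‖a - b‖ := by
  have hf_eq : ∀ u, f u = φ (‖u‖ ^ 2) • u := fun u => by
    rcases eq_or_ne u 0 with rfl | hu
    exacts [by rw [hf0, smul_zero], hf u hu]
  have hφ'abs : ∀ z, 0 < z →
      |φ' z| ≤ (C + C₁) * z ^ (-(1 : ℝ) / 2) * (1 + z ^ ((3 : ℝ) / 2)) := fun z hz =>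
    abs_le_of_sub_mul_le_of_le_mul hK.le hC.le hC₁.le (Real.rpow_nonneg hz.le _)
      (Real.rpow_nonneg hz.le _) (hφ'lb z hz) (hφ'ub z hz)
  have hthree : (3 : ℝ) + 1 = (4 : ℕ) := by norm_num
  simpa only [hf_eq, hthree, Real.rpow_natCast] using
    stmt_4_general (E := EuclideanSpace ℝ (Fin 3)) (by norm_num) hderiv hφ'abs
end

section
/- Assume in addition that φ(z) → 0 as z → 0⁺ (i.e. f′(0) = 0). Then there exists a constant C′ > 0, depending only on φ and l, such that |f(a) − f(b)| ≤ C′ (|a| + |b|)(1 + |a|³ + |b|³) |a − b| for all a, b ∈ ℝ³. (This refined pointwise Lipschitz estimate, which gains a factor vanishing at the origin, is the pointwise content of the refined difference estimate used in the proof of the dissipative bound for the smooth part (r, w) of the solution.) -/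
open scoped RealInnerProductSpace

/-!
After setting `φ 0 = 0`, the nonlinearity is the radial map `u ↦ g ‖u‖ • u` with `g s = φ (s ^ 2)`.
The singularity of `φ'` at the origin is cancelled by the chain rule:
`|g' s| = |2 * s * φ' (s ^ 2)| ≤ M * (1 + s ^ 3)`. Since `φ → 0` at `0⁺`, the function `g` is
continuous up to the origin, so it is Lipschitz on `[0, R]` with constant `M * (1 + R ^ 3)`, and in
particular `|g s| ≤ M * (1 + R ^ 3) * s` there. With `R = max ‖a‖ ‖b‖`, the estimate follows from
`g ‖a‖ • a - g ‖b‖ • b = g ‖a‖ • (a - b) + (g ‖a‖ - g ‖b‖) • b`.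
-/

open Set Filter Topology
open scoped NNReal

theorem lipschitzOnWith_Icc_of_norm_hasDerivAt_le {F : Type*} [NormedAddCommGroup F]
    [NormedSpace ℝ F] {g g' : ℝ → F} {x y : ℝ} {L : ℝ≥0} (hcont : ContinuousOn g (Icc x y))
    (hderiv : ∀ s ∈ Ioo x y, HasDerivAt g (g' s) s) (hbound : ∀ s ∈ Ioo x y, ‖g' s‖ ≤ L) :
    LipschitzOnWith L g (Icc x y) := by
  rcases eq_or_ne x y with rfl | hxy
  · simp [LipschitzOnWith]
  · rw [← closure_Ioo hxy] at hcont ⊢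
    exact ((convex_Ioo x y).lipschitzOnWith_of_nnnorm_hasDerivWithin_le
      (fun s hs => (hderiv s hs).hasDerivWithinAt) hbound).closure hcont

theorem lipschitzOnWith_comp_sq {F : Type*} [NormedAddCommGroup F] [NormedSpace ℝ F]
    {φ φ' : ℝ → F} {R : ℝ} {L : ℝ≥0} (hcont : ContinuousOn φ (Ici 0))
    (hderiv : ∀ z ∈ Ioi (0 : ℝ), HasDerivAt φ (φ' z) z)
    (hbound : ∀ s ∈ Ioo 0 R, ‖(2 * s) • φ' (s ^ 2)‖ ≤ L) :
    LipschitzOnWith L (fun s => φ (s ^ 2)) (Icc 0 R) := by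
  refine lipschitzOnWith_Icc_of_norm_hasDerivAt_le
    (hcont.comp (by fun_prop) fun s _ => sq_nonneg s) (fun s hs => ?_) hbound
  have hsq : HasDerivAt (fun s : ℝ => s ^ 2) (2 * s) s := by
    simpa using hasDerivAt_pow 2 s
  exact HasDerivAt.scomp (h := fun s : ℝ => s ^ 2) s (hderiv (s ^ 2) (pow_pos hs.1 2)) hsq

theorem abs_two_mul_mul_le_of_rpow_bounds {K C C₁ d s : ℝ} (hs : 0 < s)
    (hlb : K - C * (s ^ 2) ^ (-(1 : ℝ) / 2) ≤ d)
    (hub : d ≤ C₁ * (s ^ 2) ^ (-(1 : ℝ) / 2) * (1 + (s ^ 2) ^ ((3 : ℝ) / 2))) :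
    |2 * s * d| ≤ 2 * (|K| + |C| + |C₁|) * (1 + s ^ 3) := by
  have hinv : (s ^ 2) ^ (-(1 : ℝ) / 2) = s⁻¹ := by
    rw [← Real.rpow_natCast_mul hs.le, ← Real.rpow_neg_one]
    norm_num
  have hcube : (s ^ 2) ^ ((3 : ℝ) / 2) = s ^ 3 := by
    rw [← Real.rpow_natCast_mul hs.le, ← Real.rpow_natCast]
    norm_num
  rw [hinv] at hlb hub
  rw [hcube] at hub
  have hone_le : 1 ≤ 1 + s ^ 3 := by simp [hs.le]
  have hs_le : s ≤ 1 + s ^ 3 := by nlinarith [sq_nonneg (s - 1)]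
  have hupper : s * d ≤ |C₁| * (1 + s ^ 3) :=
    calc s * d ≤ s * (C₁ * s⁻¹ * (1 + s ^ 3)) := by gcongr
      _ = C₁ * (1 + s ^ 3) := by field_simp
      _ ≤ |C₁| * (1 + s ^ 3) := by gcongr; exact le_abs_self C₁
  have hlower : -(s * d) ≤ (|K| + |C|) * (1 + s ^ 3) :=
    calc -(s * d) ≤ -(s * (K - C * s⁻¹)) := by gcongr
      _ = -K * s + C * 1 := by field_simp; ring
      _ ≤ |K| * s + |C| * 1 := by gcongr; exacts [neg_le_abs K, le_abs_self C]
      _ ≤ |K| * (1 + s ^ 3) + |C| * (1 + s ^ 3) := by gcongr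
      _ = (|K| + |C|) * (1 + s ^ 3) := by ring
  have habs : |s * d| ≤ (|K| + |C| + |C₁|) * (1 + s ^ 3) :=
    calc |s * d| ≤ max (|C₁| * (1 + s ^ 3)) ((|K| + |C|) * (1 + s ^ 3)) :=
        max_le_max hupper hlower
      _ ≤ |C₁| * (1 + s ^ 3) + (|K| + |C|) * (1 + s ^ 3) :=
        max_le_add_of_nonneg (by positivity) (by positivity)
      _ = (|K| + |C| + |C₁|) * (1 + s ^ 3) := by ring
  calc |2 * s * d| = 2 * |s * d| := by rw [mul_assoc, abs_mul, abs_two]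
    _ ≤ 2 * ((|K| + |C| + |C₁|) * (1 + s ^ 3)) := by gcongr
    _ = 2 * (|K| + |C| + |C₁|) * (1 + s ^ 3) := by ring

theorem norm_smul_sub_smul_le_of_lipschitzOnWith {E : Type*} [SeminormedAddCommGroup E]
    [NormedSpace ℝ E] {g : ℝ → ℝ} {R : ℝ} {L : ℝ≥0}
    (hg : LipschitzOnWith L g (Icc 0 R)) (hg0 : g 0 = 0) {a b : E} (ha : ‖a‖ ≤ R) (hb : ‖b‖ ≤ R) :
    ‖g ‖a‖ • a - g ‖b‖ • b‖ ≤ L * (‖a‖ + ‖b‖) * ‖a - b‖ := by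
  have ha_mem : ‖a‖ ∈ Icc 0 R := ⟨norm_nonneg a, ha⟩
  have hb_mem : ‖b‖ ∈ Icc 0 R := ⟨norm_nonneg b, hb⟩
  have h0_mem : 0 ∈ Icc 0 R := left_mem_Icc.2 ((norm_nonneg a).trans ha)
  have hga : ‖g ‖a‖‖ ≤ L * ‖a‖ := by
    simpa [hg0] using hg.dist_le_mul _ ha_mem _ h0_mem
  have hgab : ‖g ‖a‖ - g ‖b‖‖ ≤ L * ‖a - b‖ :=
    calc ‖g ‖a‖ - g ‖b‖‖ ≤ L * |‖a‖ - ‖b‖| := hg.dist_le_mul _ ha_mem _ hb_mem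
      _ ≤ L * ‖a - b‖ := by
        gcongr
        exact abs_norm_sub_norm_le a b
  calc ‖g ‖a‖ • a - g ‖b‖ • b‖ = ‖g ‖a‖ • (a - b) + (g ‖a‖ - g ‖b‖) • b‖ := by
        congr 1
        module
    _ ≤ ‖g ‖a‖‖ * ‖a - b‖ + ‖g ‖a‖ - g ‖b‖‖ * ‖b‖ := by
        simpa only [norm_smul] using norm_add_le (g ‖a‖ • (a - b)) ((g ‖a‖ - g ‖b‖) • b)
    _ ≤ L * ‖a‖ * ‖a - b‖ + L * ‖a - b‖ * ‖b‖ := by gcongr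
    _ = L * (‖a‖ + ‖b‖) * ‖a - b‖ := by ring

section RadialMap

variable {E : Type*} [NormedAddCommGroup E] [NormedSpace ℝ E]

theorem norm_radial_sub_le_of_abs_deriv_le {φ φ' : ℝ → ℝ} {R : ℝ} {L : ℝ≥0}
    (hderiv : ∀ z ∈ Ioi (0 : ℝ), HasDerivAt φ (φ' z) z)
    (hbound : ∀ s ∈ Ioo 0 R, |2 * s * φ' (s ^ 2)| ≤ L) (hφ0 : Tendsto φ (𝓝[>] 0) (𝓝 0))
    {f : E → E} (hf : ∀ u, u ≠ 0 → f u = φ (‖u‖ ^ 2) • u) (hf0 : f 0 = 0)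
    {a b : E} (ha : ‖a‖ ≤ R) (hb : ‖b‖ ≤ R) :
    ‖f a - f b‖ ≤ L * (‖a‖ + ‖b‖) * ‖a - b‖ := by
  let ψ : ℝ → ℝ := Function.update φ 0 0
  have hψcont : ContinuousOn ψ (Ici 0) := by
    rw [continuousOn_update_iff, Ici_sdiff_left]
    exact ⟨fun z hz => (hderiv z hz).continuousAt.continuousWithinAt, fun _ => hφ0⟩
  have hψderiv : ∀ z ∈ Ioi (0 : ℝ), HasDerivAt ψ (φ' z) z := fun z hz =>
    (hderiv z hz).congr_of_eventuallyEq <|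
      (eventually_ne_nhds (ne_of_gt hz)).mono fun x hx => Function.update_of_ne hx 0 φ
  have hfψ : ∀ u, f u = ψ (‖u‖ ^ 2) • u := by
    intro u
    rcases eq_or_ne u 0 with rfl | hu
    · rw [hf0, smul_zero]
    · rw [hf u hu, show ψ (‖u‖ ^ 2) = φ (‖u‖ ^ 2) from Function.update_of_ne (by simpa) 0 φ]
  rw [hfψ a, hfψ b]
  exact norm_smul_sub_smul_le_of_lipschitzOnWith
    (lipschitzOnWith_comp_sq hψcont hψderiv hbound) (by simp [ψ]) ha hb

theorem stmt_5_general {φ φ' : ℝ → ℝ} (hderiv : ∀ z ∈ Ioi (0 : ℝ), HasDerivAt φ (φ' z) z)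
    {K C C₁ : ℝ} (hφ'lb : ∀ z ∈ Ioi (0 : ℝ), K - C * z ^ (-(1 : ℝ) / 2) ≤ φ' z)
    (hφ'ub : ∀ z ∈ Ioi (0 : ℝ), φ' z ≤ C₁ * z ^ (-(1 : ℝ) / 2) * (1 + z ^ ((3 : ℝ) / 2)))
    {f : E → E} (hf : ∀ u, u ≠ 0 → f u = φ (‖u‖ ^ 2) • u) (hf0 : f 0 = 0)
    (hφ0 : Tendsto φ (𝓝[>] 0) (𝓝 0)) (a b : E) :
    ‖f a - f b‖ ≤ 2 * (|K| + |C| + |C₁|) * (‖a‖ + ‖b‖) * (1 + ‖a‖ ^ 3 + ‖b‖ ^ 3) * ‖a - b‖ := by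
  let M : ℝ≥0 := ‖K‖₊ + ‖C‖₊ + ‖C₁‖₊
  let R : ℝ≥0 := max ‖a‖₊ ‖b‖₊
  have hbound : ∀ s ∈ Ioo (0 : ℝ) R, |2 * s * φ' (s ^ 2)| ≤ (2 * M * (1 + R ^ 3) : ℝ≥0) := by
    intro s hs
    have hz : s ^ 2 ∈ Ioi (0 : ℝ) := pow_pos hs.1 2
    calc |2 * s * φ' (s ^ 2)| ≤ 2 * M * (1 + s ^ 3) :=
          abs_two_mul_mul_le_of_rpow_bounds hs.1 (hφ'lb _ hz) (hφ'ub _ hz)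
      _ ≤ 2 * M * (1 + R ^ 3) := by gcongr; exacts [hs.1.le, hs.2.le]
  have hR : (R : ℝ) ^ 3 ≤ ‖a‖ ^ 3 + ‖b‖ ^ 3 := by
    have hmax : R ^ 3 = max (‖a‖₊ ^ 3) (‖b‖₊ ^ 3) := (pow_left_mono 3).map_max
    exact_mod_cast hmax.trans_le (max_le_add_of_nonneg zero_le zero_le)
  calc ‖f a - f b‖ ≤ (2 * M * (1 + R ^ 3) : ℝ≥0) * (‖a‖ + ‖b‖) * ‖a - b‖ :=
        norm_radial_sub_le_of_abs_deriv_le hderiv hbound hφ0 hf hf0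
          (le_max_left _ _) (le_max_right _ _)
    _ = 2 * M * (‖a‖ + ‖b‖) * (1 + R ^ 3) * ‖a - b‖ := by push_cast; ring
    _ ≤ 2 * M * (‖a‖ + ‖b‖) * (1 + ‖a‖ ^ 3 + ‖b‖ ^ 3) * ‖a - b‖ := by
        rw [add_assoc 1]
        gcongr

end RadialMap

/-- Refined pointwise Lipschitz estimate under the extra assumption `φ(z) → 0` as
`z → 0⁺` (i.e. `f'(0) = 0`):
`|f(a) - f(b)| ≤ C'(|a| + |b|)(1 + |a|³ + |b|³)|a - b|` for all `a, b ∈ ℝ³`. -/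
theorem stmt_5
    (l : ℝ) (hl : l ∈ Set.Ioc (0:ℝ) 2)
    (φ φ' : ℝ → ℝ)
    (hderiv : ∀ z ∈ Set.Ioi (0:ℝ), HasDerivAt φ (φ' z) z)
    (hφ'cont : ContinuousOn φ' (Set.Ioi 0))
    (α K C C₁ : ℝ) (hα : 0 < α) (hK : 0 < K) (hC : 0 < C) (hC₁ : 0 < C₁)
    (hφ'lb : ∀ z ∈ Set.Ioi (0:ℝ), K - C * z ^ (-(1:ℝ)/2) ≤ φ' z)
    (hφ'ub : ∀ z ∈ Set.Ioi (0:ℝ), φ' z ≤ C₁ * z ^ (-(1:ℝ)/2) * (1 + z ^ ((3:ℝ)/2)))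
    (hφlb : ∀ z ∈ Set.Ioi (0:ℝ), -C + α * z ^ l ≤ φ z)
    (hφub : ∀ z ∈ Set.Ioi (0:ℝ), φ z ≤ C * (1 + z ^ l))
    (f : EuclideanSpace ℝ (Fin 3) → EuclideanSpace ℝ (Fin 3))
    (hf : ∀ u : EuclideanSpace ℝ (Fin 3), u ≠ 0 → f u = φ (‖u‖ ^ 2) • u)
    (hf0 : f 0 = 0)
    (hφ0 : Filter.Tendsto φ (nhdsWithin 0 (Set.Ioi 0)) (nhds 0)) :
    ∃ C' : ℝ, 0 < C' ∧ ∀ a b : EuclideanSpace ℝ (Fin 3),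
      ‖f a - f b‖ ≤ C' * (‖a‖ + ‖b‖) * (1 + ‖a‖ ^ 3 + ‖b‖ ^ 3) * ‖a - b‖ :=
  ⟨2 * (|K| + |C| + |C₁|), by positivity,
    stmt_5_general hderiv hφ'lb hφ'ub hf hf0 hφ0⟩
end

section
/- Assume in addition that l > 1. Then there exist constants κ > 0 and L ≥ 0, depending only on φ and l, such that (f(a) − f(b))·(a − b) ≥ κ ( |a|^{1+l} + |b|^{1+l} ) |a − b|² − L |a − b|² for all a, b ∈ ℝ³. (This strong monotonicity of the super-cubic Forchheimer nonlinearity is what allows the Navier–Stokes inertial term B(u,u) to be absorbed in the uniqueness and smoothing proofs for the Navier–Stokes–Brinkman–Forchheimer equation.) -/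
open scoped RealInnerProductSpace

/-!
Write `p = φ(|a|²)` and `q = φ(|b|²)`. Polarization gives
`(p a - q b)·(a - b) = (p + q)/2 |a - b|² + (p - q)(|a|² - |b|²)/2`.
The lower bound on `φ'` says that `φ(z) - (K z - 2C√z)` is nondecreasing, so the last term loses at
most `(|K|(|a|² + |b|²) + |C|(|a| + |b|))|a - b|²`. The first term is at least
`(α/2)(|a|^{2l} + |b|^{2l})|a - b|²` up to a constant multiple of `|a - b|²`. Since `l > 1`, the
exponent `2l` exceeds `1 + l`, `2` and `1`, so this gain absorbs the loss and leaves
`|a|^{1+l} + |b|^{1+l}`.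
-/

lemma exists_mul_rpow_le_mul_rpow_add {p q ε : ℝ} (A : ℝ) (hp : 0 ≤ p) (hpq : p < q)
    (hε : 0 < ε) :
    ∃ M : ℝ, 0 ≤ M ∧ ∀ x : ℝ, 0 ≤ x → A * x ^ p ≤ ε * x ^ q + M := by
  obtain ⟨N, hN⟩ := Filter.eventually_atTop.1
    (((tendsto_rpow_atTop (sub_pos.2 hpq)).eventually_ge_atTop (A / ε)).and
      (Filter.eventually_gt_atTop 0))
  have hN0 : 0 < N := (hN N le_rfl).2
  refine ⟨|A| * N ^ p, by positivity, fun x hx => ?_⟩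
  rcases le_total x N with hxN | hNx
  · calc A * x ^ p ≤ |A| * N ^ p :=
          mul_le_mul (le_abs_self A) (Real.rpow_le_rpow hx hxN hp) (by positivity) (abs_nonneg A)
      _ ≤ ε * x ^ q + |A| * N ^ p := le_add_of_nonneg_left (by positivity)
  · calc A * x ^ p ≤ ε * x ^ (q - p) * x ^ p := by
          gcongr
          exact (div_le_iff₀' hε).1 (hN x hNx).1
      _ = ε * x ^ q := by
          rw [mul_assoc, ← Real.rpow_add (hN0.trans_le hNx), sub_add_cancel]
      _ ≤ ε * x ^ q + |A| * N ^ p := le_add_of_nonneg_right (by positivity)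

lemma exists_rpow_add_quadratic_le_mul_rpow_add {p q ε : ℝ} (A B : ℝ) (hp : 0 ≤ p) (hpq : p < q)
    (hq : 2 < q) (hε : 0 < ε) :
    ∃ M : ℝ, 0 ≤ M ∧ ∀ x : ℝ, 0 ≤ x → x ^ p + A * x ^ 2 + B * x ≤ ε * x ^ q + M := by
  have hε3 : 0 < ε / 3 := by positivity
  obtain ⟨M₀, hM₀, h₀⟩ := exists_mul_rpow_le_mul_rpow_add 1 hp hpq hε3
  obtain ⟨M₁, hM₁, h₁⟩ := exists_mul_rpow_le_mul_rpow_add A zero_le_two hq hε3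
  obtain ⟨M₂, hM₂, h₂⟩ :=
    exists_mul_rpow_le_mul_rpow_add B zero_le_one (one_lt_two.trans hq) hε3
  refine ⟨M₀ + M₁ + M₂, by positivity, fun x hx => ?_⟩
  have hx₀ := h₀ x hx
  have hx₁ := h₁ x hx
  have hx₂ := h₂ x hx
  rw [Real.rpow_two] at hx₁
  rw [Real.rpow_one] at hx₂
  linarith

section RadialProfile

variable {φ φ' : ℝ → ℝ} {K C : ℝ}

lemma monotoneOn_sub_linear_sub_sqrt
    (hderiv : ∀ z ∈ Set.Ioi (0 : ℝ), HasDerivAt φ (φ' z) z)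
    (hφ'lb : ∀ z ∈ Set.Ioi (0 : ℝ), K - C * z ^ (-(1 : ℝ) / 2) ≤ φ' z) :
    MonotoneOn (fun z => φ z - (K * z - 2 * C * √z)) (Set.Ioi 0) := by
  have hd : ∀ z ∈ Set.Ioi (0 : ℝ), HasDerivAt (fun z => φ z - (K * z - 2 * C * √z))
      (φ' z - (K - C * z ^ (-(1 : ℝ) / 2))) z := by
    intro z hz
    have hsqrt : 2 * C * (1 / (2 * √z)) = C * z ^ (-(1 : ℝ) / 2) := by
      rw [neg_div, Real.rpow_neg (le_of_lt hz), ← Real.sqrt_eq_rpow]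
      ring
    rw [← hsqrt]
    exact (hderiv z hz).sub ((hasDerivAt_const_mul K).sub
      ((Real.hasDerivAt_sqrt (ne_of_gt hz)).const_mul (2 * C)))
  exact monotoneOn_of_hasDerivWithinAt_nonneg (convex_Ioi 0)
    (fun z hz => (hd z hz).continuousAt.continuousWithinAt)
    (fun z hz => (hd z (interior_subset hz)).hasDerivWithinAt)
    fun z hz => sub_nonneg.2 (hφ'lb z (interior_subset hz))

lemma neg_quadratic_mul_sq_sub_le_sub_mul_sq_sub_sq
    (hmono : MonotoneOn (fun z => φ z - (K * z - 2 * C * √z)) (Set.Ioi 0))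
    {r s : ℝ} (hr : 0 < r) (hs : 0 < s) :
    -2 * (|K| * (r ^ 2 + s ^ 2) + |C| * (r + s)) * (r - s) ^ 2 ≤
      (φ (r ^ 2) - φ (s ^ 2)) * (r ^ 2 - s ^ 2) := by
  have hcross : 0 ≤ (φ (r ^ 2) - (K * r ^ 2 - 2 * C * r) - (φ (s ^ 2) - (K * s ^ 2 - 2 * C * s)))
      * (r ^ 2 - s ^ 2) := by
    simpa only [Real.sqrt_sq hr.le, Real.sqrt_sq hs.le, id_eq] using
      (hmono.monovaryOn monotoneOn_id).sub_mul_sub_nonneg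
        (Set.mem_Ioi.2 (pow_pos hs 2)) (Set.mem_Ioi.2 (pow_pos hr 2))
  have hK : -(|K| * (2 * (r ^ 2 + s ^ 2))) ≤ K * (r + s) ^ 2 :=
    calc -(|K| * (2 * (r ^ 2 + s ^ 2))) ≤ -(|K| * (r + s) ^ 2) := by
          gcongr
          exact add_sq_le
      _ = -|K| * (r + s) ^ 2 := by ring
      _ ≤ K * (r + s) ^ 2 := by
          gcongr
          exact neg_abs_le K
  have hC : C * (r + s) ≤ |C| * (r + s) := by
    gcongr
    exact le_abs_self C
  calc -2 * (|K| * (r ^ 2 + s ^ 2) + |C| * (r + s)) * (r - s) ^ 2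
      ≤ (K * (r + s) ^ 2 - 2 * (C * (r + s))) * (r - s) ^ 2 := by
        gcongr
        linarith
    _ ≤ (φ (r ^ 2) - φ (s ^ 2)) * (r ^ 2 - s ^ 2) := by linarith

end RadialProfile

section InnerProductSpace

variable {E : Type*} [NormedAddCommGroup E] [InnerProductSpace ℝ E]

lemma inner_smul_sub_smul_sub (p q : ℝ) (a b : E) :
    ⟪p • a - q • b, a - b⟫ =
      (p + q) / 2 * ‖a - b‖ ^ 2 + (p - q) * (‖a‖ ^ 2 - ‖b‖ ^ 2) / 2 := by
  simp only [norm_sub_sq_real, inner_sub_left, inner_sub_right, real_inner_smul_left,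
    real_inner_self_eq_norm_sq, real_inner_comm a b]
  ring

variable {φ φ' : ℝ → ℝ} {l α K C C₀ : ℝ}

lemma le_inner_radial_self (hφlb : ∀ z ∈ Set.Ioi (0 : ℝ), -C₀ + α * z ^ l ≤ φ z) (u : E) :
    (α * ‖u‖ ^ (2 * l) - C₀) * ‖u‖ ^ 2 ≤ ⟪φ (‖u‖ ^ 2) • u, u⟫ := by
  rw [real_inner_smul_left, real_inner_self_eq_norm_sq]
  rcases eq_or_ne u 0 with rfl | hu
  · simp
  have hφu : -C₀ + α * ‖u‖ ^ (2 * l) ≤ φ (‖u‖ ^ 2) := by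
    simpa [Real.rpow_mul (norm_nonneg u)] using hφlb _ (pow_pos (norm_pos_iff.2 hu) 2)
  refine mul_le_mul_of_nonneg_right ?_ (sq_nonneg _)
  linarith

lemma le_inner_radial_sub_radial (hα : 0 ≤ α) (hl : l ≠ 0)
    (hmono : MonotoneOn (fun z => φ z - (K * z - 2 * C * √z)) (Set.Ioi 0))
    (hφlb : ∀ z ∈ Set.Ioi (0 : ℝ), -C₀ + α * z ^ l ≤ φ z) (a b : E) :
    (α / 2 * (‖a‖ ^ (2 * l) + ‖b‖ ^ (2 * l)) - C₀
        - (|K| * (‖a‖ ^ 2 + ‖b‖ ^ 2) + |C| * (‖a‖ + ‖b‖))) * ‖a - b‖ ^ 2 ≤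
      ⟪φ (‖a‖ ^ 2) • a - φ (‖b‖ ^ 2) • b, a - b⟫ := by
  -- `φ 0` is arbitrary, so a zero argument is treated separately.
  have hzero (u : E) : (α / 2 * ‖u‖ ^ (2 * l) - C₀ - (|K| * ‖u‖ ^ 2 + |C| * ‖u‖)) * ‖u‖ ^ 2 ≤
      ⟪φ (‖u‖ ^ 2) • u, u⟫ := by
    have hgain : 0 ≤ α * ‖u‖ ^ (2 * l) := by positivity
    have hloss : 0 ≤ |K| * ‖u‖ ^ 2 + |C| * ‖u‖ := by positivity
    exact (mul_le_mul_of_nonneg_right (by linarith) (sq_nonneg _)).trans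
      (le_inner_radial_self hφlb u)
  rcases eq_or_ne a 0 with rfl | ha
  · simpa [Real.zero_rpow, hl] using hzero b
  rcases eq_or_ne b 0 with rfl | hb
  · simpa [Real.zero_rpow, hl] using hzero a
  have hmean : α / 2 * (‖a‖ ^ (2 * l) + ‖b‖ ^ (2 * l)) - C₀ ≤
      (φ (‖a‖ ^ 2) + φ (‖b‖ ^ 2)) / 2 := by
    have hφa := hφlb _ (pow_pos (norm_pos_iff.2 ha) 2)
    have hφb := hφlb _ (pow_pos (norm_pos_iff.2 hb) 2)
    rw [← Real.rpow_natCast_mul (norm_nonneg _), Nat.cast_ofNat] at hφa hφb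
    linarith
  have hgain := mul_le_mul_of_nonneg_right hmean (sq_nonneg ‖a - b‖)
  have hcross := neg_quadratic_mul_sq_sub_le_sub_mul_sq_sub_sq hmono
    (norm_pos_iff.2 ha) (norm_pos_iff.2 hb)
  have hnorm : (‖a‖ - ‖b‖) ^ 2 ≤ ‖a - b‖ ^ 2 :=
    sq_le_sq.2 (by simpa using abs_norm_sub_norm_le a b)
  have hloss := mul_le_mul_of_nonneg_left hnorm
    (show 0 ≤ |K| * (‖a‖ ^ 2 + ‖b‖ ^ 2) + |C| * (‖a‖ + ‖b‖) by positivity)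
  rw [inner_smul_sub_smul_sub]
  linarith

theorem stmt_6_general (hl1 : 1 < l) (hα : 0 < α)
    (hderiv : ∀ z ∈ Set.Ioi (0 : ℝ), HasDerivAt φ (φ' z) z)
    (hφ'lb : ∀ z ∈ Set.Ioi (0 : ℝ), K - C * z ^ (-(1 : ℝ) / 2) ≤ φ' z)
    (hφlb : ∀ z ∈ Set.Ioi (0 : ℝ), -C₀ + α * z ^ l ≤ φ z)
    {f : E → E} (hf : ∀ u : E, u ≠ 0 → f u = φ (‖u‖ ^ 2) • u) (hf0 : f 0 = 0) :
    ∃ κ : ℝ, 0 < κ ∧ ∃ L : ℝ, 0 ≤ L ∧ ∀ a b : E,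
      ⟪f a - f b, a - b⟫ ≥
        κ * (‖a‖ ^ ((1 : ℝ) + l) + ‖b‖ ^ ((1 : ℝ) + l)) * ‖a - b‖ ^ 2 - L * ‖a - b‖ ^ 2 := by
  have hfφ (u : E) : f u = φ (‖u‖ ^ 2) • u := by
    rcases eq_or_ne u 0 with rfl | hu
    · rw [hf0, smul_zero]
    · exact hf u hu
  obtain ⟨M, hM0, hM⟩ := exists_rpow_add_quadratic_le_mul_rpow_add (p := 1 + l) (q := 2 * l)
    |K| |C| (by linarith) (by linarith) (by linarith) (half_pos hα)
  refine ⟨1, one_pos, 2 * M + |C₀|, by positivity, fun a b => ?_⟩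
  have hmono := monotoneOn_sub_linear_sub_sqrt hderiv hφ'lb
  calc ⟪f a - f b, a - b⟫
      ≥ (α / 2 * (‖a‖ ^ (2 * l) + ‖b‖ ^ (2 * l)) - C₀
          - (|K| * (‖a‖ ^ 2 + ‖b‖ ^ 2) + |C| * (‖a‖ + ‖b‖))) * ‖a - b‖ ^ 2 := by
        rw [hfφ, hfφ]
        exact le_inner_radial_sub_radial hα.le (by linarith) hmono hφlb a b
    _ ≥ (1 * (‖a‖ ^ (1 + l) + ‖b‖ ^ (1 + l)) - (2 * M + |C₀|)) * ‖a - b‖ ^ 2 := by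
        refine mul_le_mul_of_nonneg_right ?_ (sq_nonneg _)
        linarith [hM ‖a‖ (norm_nonneg a), hM ‖b‖ (norm_nonneg b), le_abs_self C₀]
    _ = _ := sub_mul _ _ _

end InnerProductSpace

/-- Strong monotonicity of the super-cubic (`l > 1`) Forchheimer nonlinearity:
`(f(a) - f(b))·(a - b) ≥ κ(|a|^{1+l} + |b|^{1+l})|a - b|² - L|a - b|²`. -/
theorem stmt_6
    (l : ℝ) (hl : l ∈ Set.Ioc (0:ℝ) 2)
    (φ φ' : ℝ → ℝ)
    (hderiv : ∀ z ∈ Set.Ioi (0:ℝ), HasDerivAt φ (φ' z) z)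
    (hφ'cont : ContinuousOn φ' (Set.Ioi 0))
    (α K C C₁ : ℝ) (hα : 0 < α) (hK : 0 < K) (hC : 0 < C) (hC₁ : 0 < C₁)
    (hφ'lb : ∀ z ∈ Set.Ioi (0:ℝ), K - C * z ^ (-(1:ℝ)/2) ≤ φ' z)
    (hφ'ub : ∀ z ∈ Set.Ioi (0:ℝ), φ' z ≤ C₁ * z ^ (-(1:ℝ)/2) * (1 + z ^ ((3:ℝ)/2)))
    (hφlb : ∀ z ∈ Set.Ioi (0:ℝ), -C + α * z ^ l ≤ φ z)
    (hφub : ∀ z ∈ Set.Ioi (0:ℝ), φ z ≤ C * (1 + z ^ l))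
    (f : EuclideanSpace ℝ (Fin 3) → EuclideanSpace ℝ (Fin 3))
    (hf : ∀ u : EuclideanSpace ℝ (Fin 3), u ≠ 0 → f u = φ (‖u‖ ^ 2) • u)
    (hf0 : f 0 = 0)
    (hl1 : 1 < l) :
    ∃ κ : ℝ, 0 < κ ∧ ∃ L : ℝ, 0 ≤ L ∧ ∀ a b : EuclideanSpace ℝ (Fin 3),
      ⟪f a - f b, a - b⟫ ≥
        κ * (‖a‖ ^ ((1:ℝ)+l) + ‖b‖ ^ ((1:ℝ)+l)) * ‖a - b‖ ^ 2 - L * ‖a - b‖ ^ 2 :=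
  stmt_6_general hl1 hα hderiv hφ'lb hφlb hf hf0
end

section
/- Gronwall lemma with a parameter: Let ε₀ > 0 and C > 0, and let y : [0,∞) → [0,∞) be a differentiable function such that for every ε ∈ (0, ε₀] and every t ≥ 0 one has y′(t) + ε y(t) ≤ C ε⁶ y(t)³ + C. Then there exist a constant μ > 0, a constant C* > 0 and a monotone non-decreasing function Q : [0,∞) → [0,∞), all depending only on ε₀ and C, such that y(t) ≤ Q(y(0)) e^{−μ t} + C* for all t ≥ 0. (This is the parametric Gronwall argument applied to the energy functional 𝓔_ε(u,p) to deduce the basic dissipative estimate in the phase space E.) -/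
/-!
The parameter may be chosen pointwise in time. With `M = 2 C + μ` and `ε = M / y t`, admissible once
`M / ε₀ ≤ y t`, the term `ε y` becomes the constant `M`, while `ε ^ p y ^ q = M ^ p / y ^ (p - q)`
is at most `1` for large `y` because `q < p`. So `y' ≤ -μ` wherever `y` is above a level `R`
depending only on the data, and `y t ≤ max R (y 0 - μ t)`. Finally `x ≤ exp x` turns this linear
descent into exponential decay.
-/

open Set Real

lemma le_max_sub_mul_of_deriv_right_le_neg {y y' : ℝ → ℝ} {a b c R : ℝ} (hc : 0 < c) (hab : a ≤ b)
    (hcont : ContinuousOn y (Icc a b))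
    (hderiv : ∀ x ∈ Ico a b, HasDerivWithinAt y (y' x) (Ici x) x)
    (hdescent : ∀ x ∈ Ico a b, R ≤ y x → y' x ≤ -c) :
    y b ≤ max R (y a - c * (b - a)) := by
  by_cases hreach : ∃ s ∈ Icc a b, y s ≤ R
  · obtain ⟨s, hs, hys⟩ := hreach
    have hsub : Ico s b ⊆ Ico a b := Ico_subset_Ico_left hs.1
    have hbelow : y b ≤ R :=
      image_le_of_deriv_right_lt_deriv_boundary (B := fun _ ↦ R) (B' := fun _ ↦ 0)
        (hcont.mono (Icc_subset_Icc_left hs.1)) (fun x hx ↦ hderiv x (hsub hx)) hys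
        (fun x ↦ hasDerivAt_const x R)
        (fun x hx hxR ↦ (hdescent x (hsub hx) hxR.ge).trans_lt (neg_neg_of_pos hc))
        (right_mem_Icc.2 hs.2)
    exact le_max_of_le_left hbelow
  · push Not at hreach
    have hline (x : ℝ) : HasDerivAt (fun x ↦ y a - c * (x - a)) (-c) x := by
      simpa using (((hasDerivAt_id x).sub_const a).const_mul c).const_sub (y a)
    have hlinear : y b ≤ y a - c * (b - a) :=
      image_le_of_deriv_right_le_deriv_boundary hcont hderiv (by simp)
        (fun x _ ↦ (hline x).continuousAt.continuousWithinAt)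
        (fun x _ ↦ (hline x).hasDerivWithinAt)
        (fun x hx ↦ hdescent x hx (hreach x (Ico_subset_Icc_self hx)).le)
        (right_mem_Icc.2 hab)
    exact le_max_of_le_right hlinear

lemma div_pow_mul_pow_le_one {M z : ℝ} {p q : ℕ} (hqp : q < p) (hz : 1 ≤ z) (hMz : M ^ p ≤ z) :
    (M / z) ^ p * z ^ q ≤ 1 := by
  have hz₀ : 0 < z := one_pos.trans_le hz
  rw [div_pow, div_mul_eq_mul_div, div_le_one (pow_pos hz₀ p)]
  calc M ^ p * z ^ q ≤ z * z ^ q := by gcongr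
    _ = z ^ (q + 1) := (pow_succ' z q).symm
    _ ≤ z ^ p := pow_le_pow_right₀ hz hqp

/-- The level `R` above which the family of inequalities `y' + ε y ≤ C ε ^ p y ^ q + C`, for
`0 < ε ≤ ε₀` and any `q < p`, forces `y' ≤ -μ`. -/
noncomputable def descentLevel (ε₀ C μ : ℝ) (p : ℕ) : ℝ :=
  max 1 (max ((2 * C + μ) ^ p) ((2 * C + μ) / ε₀))

lemma descentLevel_pos (ε₀ C μ : ℝ) (p : ℕ) : 0 < descentLevel ε₀ C μ p :=
  lt_max_of_lt_left one_pos

lemma le_neg_of_descentLevel_le {ε₀ C μ z d : ℝ} {p q : ℕ} (hε₀ : 0 < ε₀) (hC : 0 ≤ C)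
    (hμ : 0 < μ) (hqp : q < p) (hz : descentLevel ε₀ C μ p ≤ z)
    (h : ∀ ε ∈ Ioc 0 ε₀, d + ε * z ≤ C * ε ^ p * z ^ q + C) : d ≤ -μ := by
  obtain ⟨hz₁, hpow, hdiv⟩ : 1 ≤ z ∧ (2 * C + μ) ^ p ≤ z ∧ (2 * C + μ) / ε₀ ≤ z := by
    simpa only [descentLevel, max_le_iff] using hz
  have hz₀ : 0 < z := one_pos.trans_le hz₁
  have hadmissible : (2 * C + μ) / z ∈ Ioc 0 ε₀ :=
    ⟨by positivity, (div_le_comm₀ hε₀ hz₀).1 hdiv⟩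
  have hoptimal : d + (2 * C + μ) ≤ C * (((2 * C + μ) / z) ^ p * z ^ q) + C := by
    simpa only [div_mul_cancel₀ _ hz₀.ne', mul_assoc] using h _ hadmissible
  have hforcing : C * (((2 * C + μ) / z) ^ p * z ^ q) ≤ C :=
    mul_le_of_le_one_right hC (div_pow_mul_pow_le_one hqp hz₁ hpow)
  linarith

lemma max_sub_mul_le_exp_mul_exp_add {R : ℝ} (hR : 0 ≤ R) (s μ t : ℝ) :
    max R (s - μ * t) ≤ exp s * exp (-μ * t) + R := by
  have hexp : exp s * exp (-μ * t) = exp (s - μ * t) := by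
    rw [← exp_add, neg_mul, sub_eq_add_neg]
  rw [hexp]
  exact max_le (le_add_of_nonneg_left (exp_pos _).le)
    (le_add_of_le_of_nonneg ((lt_add_one _).le.trans (add_one_le_exp _)) hR)

theorem stmt_12_general {ε₀ C μ : ℝ} {p q : ℕ} (hε₀ : 0 < ε₀) (hC : 0 ≤ C) (hμ : 0 < μ)
    (hqp : q < p) :
    ∃ Cs : ℝ, 0 < Cs ∧ ∃ Q : ℝ → ℝ, Monotone Q ∧ (∀ s, 0 ≤ Q s) ∧
      ∀ y y' : ℝ → ℝ,
        ContinuousOn y (Ici 0) →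
        (∀ t, 0 ≤ t → HasDerivWithinAt y (y' t) (Ici t) t) →
        (∀ ε ∈ Ioc 0 ε₀, ∀ t, 0 ≤ t → y' t + ε * y t ≤ C * ε ^ p * y t ^ q + C) →
        ∀ t, 0 ≤ t → y t ≤ Q (y 0) * exp (-μ * t) + Cs := by
  have hR := descentLevel_pos ε₀ C μ p
  refine ⟨descentLevel ε₀ C μ p, hR, exp, exp_monotone, exp_nonneg, ?_⟩
  intro y y' hcont hderiv hineq t ht
  have hdescent (x : ℝ) (hx : x ∈ Ico 0 t) (hxR : descentLevel ε₀ C μ p ≤ y x) : y' x ≤ -μ :=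
    le_neg_of_descentLevel_le hε₀ hC hμ hqp hxR fun ε hε ↦ hineq ε hε x hx.1
  calc y t ≤ max (descentLevel ε₀ C μ p) (y 0 - μ * (t - 0)) :=
        le_max_sub_mul_of_deriv_right_le_neg hμ ht (hcont.mono Icc_subset_Ici_self)
          (fun x hx ↦ hderiv x hx.1) hdescent
    _ = max (descentLevel ε₀ C μ p) (y 0 - μ * t) := by rw [sub_zero]
    _ ≤ exp (y 0) * exp (-μ * t) + descentLevel ε₀ C μ p :=
        max_sub_mul_le_exp_mul_exp_add hR.le (y 0) μ t

/-- Gronwall lemma with a parameter: if a nonnegative differentiable function `y`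
satisfies `y'(t) + ε y(t) ≤ C ε⁶ y(t)³ + C` for all `t ≥ 0` and all `ε ∈ (0, ε₀]`,
then `y(t) ≤ Q(y(0)) e^{-μ t} + C*` for some `μ > 0`, `C* > 0` and a monotone
non-decreasing nonnegative function `Q`, all depending only on `ε₀` and `C`. -/
theorem stmt_12 (ε₀ C : ℝ) (hε₀ : 0 < ε₀) (hC : 0 < C) :
    ∃ μ : ℝ, 0 < μ ∧ ∃ Cs : ℝ, 0 < Cs ∧ ∃ Q : ℝ → ℝ,
      Monotone Q ∧ (∀ s : ℝ, 0 ≤ Q s) ∧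
      ∀ y y' : ℝ → ℝ,
        (∀ t : ℝ, 0 ≤ t → HasDerivAt y (y' t) t) →
        (∀ t : ℝ, 0 ≤ t → 0 ≤ y t) →
        (∀ ε ∈ Set.Ioc (0:ℝ) ε₀, ∀ t : ℝ, 0 ≤ t →
          y' t + ε * y t ≤ C * ε ^ 6 * (y t) ^ 3 + C) →
        ∀ t : ℝ, 0 ≤ t → y t ≤ Q (y 0) * Real.exp (-μ * t) + Cs := by
  obtain ⟨Cs, hCs, Q, hQmono, hQnonneg, hbound⟩ :=
    stmt_12_general (p := 6) (q := 3) hε₀ hC.le one_pos (by norm_num)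
  exact ⟨1, one_pos, Cs, hCs, Q, hQmono, hQnonneg, fun y y' hderiv _ hineq ↦ hbound y y'
    (fun t ht ↦ (hderiv t ht).continuousAt.continuousWithinAt)
    (fun t ht ↦ (hderiv t ht).hasDerivWithinAt) hineq⟩
end

section
/- Transitivity of exponential attraction: Let (X, d) be a metric space and let S(t) : X → X, t ≥ 0, satisfy the semigroup property S(t+s) = S(t) ∘ S(s) and the uniform Lipschitz estimate d(S(t)x, S(t)y) ≤ C e^{K t} d(x, y) for all x, y ∈ X and t ≥ 0, with constants C ≥ 1, K ≥ 0. Let B₁, B₂, B₃ ⊆ X with B₂ nonempty, and suppose there are constants C₁, C₂ ≥ 0 and α₁, α₂ > 0 such that for all t ≥ 0: sup_{x ∈ B₁} dist(S(t)x, B₂) ≤ C₁ e^{−α₁ t} and sup_{x ∈ B₂} dist(S(t)x, B₃) ≤ C₂ e^{−α₂ t}, where dist(x, A) = inf_{a ∈ A} d(x, a). Then for all t ≥ 0: sup_{x ∈ B₁} dist(S(t)x, B₃) ≤ C′ e^{−α′ t}, where C′ = C C₁ + C₂ and α′ = α₁ α₂ / (K + α₁ + α₂). -/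
/-!
Follow the flow for time `b`, which brings a point of `B₁` within `C₁ e^{-α₁ b}` of `B₂`, then for
time `a`: this expands the error by at most `C e^{K a}` and brings the points of `B₂` within
`C₂ e^{-α₂ a}` of `B₃`. The two contributions decay at the same rate when `a + b = t` is split so
that `K a - α₁ b = -α₂ a`, that is `a = α₁ t / (K + α₁ + α₂)`.
-/

open Metric
open scoped NNReal

theorem infDist_map_le_of_lipschitzWith {X Y : Type*} [PseudoMetricSpace X] [PseudoMetricSpace Y]
    {f : X → Y} {M : ℝ≥0} (hf : LipschitzWith M f) {B : Set X} (hB : B.Nonempty) {A : Set Y}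
    {ε : ℝ} (hBA : ∀ y ∈ B, infDist (f y) A ≤ ε) (x : X) :
    infDist (f x) A ≤ M * infDist x B + ε := by
  have : Nonempty B := hB.to_subtype
  rw [← sub_le_iff_le_add, infDist_eq_iInf (s := B), Real.mul_iInf_of_nonneg M.coe_nonneg]
  refine le_ciInf fun ⟨y, hy⟩ ↦ ?_
  rw [sub_le_iff_le_add]
  calc infDist (f x) A
      ≤ infDist (f y) A + dist (f x) (f y) := infDist_le_infDist_add_dist
    _ ≤ ε + M * dist x y := add_le_add (hBA y hy) (hf.dist_le_mul x y)
    _ = M * dist x y + ε := add_comm _ _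

/-- Under the evolution `S`, the set `A` attracts `B` exponentially with constant `c` and rate `α`:
the one-sided Hausdorff distance from `S t B` to `A` is at most `c * exp (-α * t)` for `t ≥ 0`.
The supremum over `B` is spelled out as a pointwise bound; `infDist` to `A = ∅` is `0`, not `∞`. -/
def ExpAttracts {X : Type*} [PseudoMetricSpace X] (S : ℝ → X → X) (B A : Set X) (c α : ℝ) : Prop :=
  ∀ t : ℝ, 0 ≤ t → ∀ x ∈ B, infDist (S t x) A ≤ c * Real.exp (-α * t)

theorem ExpAttracts.infDist_comp_le {X : Type*} [PseudoMetricSpace X] {S : ℝ → X → X}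
    {B₁ B₂ B₃ : Set X} {C₁ C₂ α₁ α₂ : ℝ} (h12 : ExpAttracts S B₁ B₂ C₁ α₁)
    (h23 : ExpAttracts S B₂ B₃ C₂ α₂) (hB₂ : B₂.Nonempty) {a b : ℝ} (ha : 0 ≤ a) (hb : 0 ≤ b)
    {M : ℝ≥0} (hS : LipschitzWith M (S a)) {x : X} (hx : x ∈ B₁) :
    infDist (S a (S b x)) B₃ ≤
      M * (C₁ * Real.exp (-α₁ * b)) + C₂ * Real.exp (-α₂ * a) := by
  refine (infDist_map_le_of_lipschitzWith hS hB₂ (h23 a ha) (S b x)).trans ?_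
  gcongr
  exact h12 b hb x hx

theorem exists_add_eq_and_exponents_eq {K α₁ α₂ t : ℝ} (hα₁ : 0 < α₁) (hK : 0 ≤ K + α₂)
    (ht : 0 ≤ t) :
    ∃ a b : ℝ, 0 ≤ a ∧ 0 ≤ b ∧ a + b = t ∧
      K * a + -α₁ * b = -(α₁ * α₂ / (K + α₁ + α₂)) * t ∧
      -α₂ * a = -(α₁ * α₂ / (K + α₁ + α₂)) * t := by
  have hD : 0 < K + α₁ + α₂ := by linarith
  refine ⟨α₁ * t / (K + α₁ + α₂), (K + α₂) * t / (K + α₁ + α₂), by positivity, by positivity,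
    ?_, ?_, ?_⟩ <;> field_simp <;> ring

theorem stmt_13_general {X : Type*} [PseudoMetricSpace X] {S : ℝ → X → X}
    (hsem : ∀ t : ℝ, 0 ≤ t → ∀ s : ℝ, 0 ≤ s → S (t + s) = S t ∘ S s)
    {C K : ℝ} (hC : 0 ≤ C)
    (hlip : ∀ t : ℝ, 0 ≤ t → ∀ x y : X,
      dist (S t x) (S t y) ≤ C * Real.exp (K * t) * dist x y)
    {B₁ B₂ B₃ : Set X} (hB₂ : B₂.Nonempty)
    {C₁ C₂ α₁ α₂ : ℝ} (hα₁ : 0 < α₁) (hK : 0 ≤ K + α₂)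
    (h12 : ExpAttracts S B₁ B₂ C₁ α₁) (h23 : ExpAttracts S B₂ B₃ C₂ α₂) :
    ExpAttracts S B₁ B₃ (C * C₁ + C₂) (α₁ * α₂ / (K + α₁ + α₂)) := by
  intro t ht x hx
  obtain ⟨a, b, ha, hb, hab, hexp₁, hexp₂⟩ := exists_add_eq_and_exponents_eq hα₁ hK ht
  have hM : 0 ≤ C * Real.exp (K * a) := by positivity
  have hS : S t x = S a (S b x) := by rw [← hab, hsem a ha b hb, Function.comp_apply]
  calc infDist (S t x) B₃
      ≤ C * Real.exp (K * a) * (C₁ * Real.exp (-α₁ * b)) + C₂ * Real.exp (-α₂ * a) := by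
        have h := h12.infDist_comp_le h23 hB₂ ha hb (.of_dist_le' (hlip a ha)) hx
        rwa [← hS, Real.coe_toNNReal _ hM] at h
    _ = C * C₁ * Real.exp (K * a + -α₁ * b) + C₂ * Real.exp (-α₂ * a) := by
        rw [Real.exp_add]; ring
    _ = (C * C₁ + C₂) * Real.exp (-(α₁ * α₂ / (K + α₁ + α₂)) * t) := by
        rw [hexp₁, hexp₂, add_mul]

/-- Transitivity of exponential attraction: if the semigroup `S` is uniformly
Lipschitz with constant `C e^{K t}`, `B₁` is attracted to `B₂` exponentially with
rate `α₁` and constant `C₁`, and `B₂` is attracted to `B₃` exponentially with rate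
`α₂` and constant `C₂`, then `B₁` is attracted to `B₃` exponentially with constant
`C C₁ + C₂` and rate `α₁α₂/(K + α₁ + α₂)`. -/
theorem stmt_13 {X : Type*} [MetricSpace X]
    (S : ℝ → X → X)
    (hsem : ∀ t : ℝ, 0 ≤ t → ∀ s : ℝ, 0 ≤ s → S (t + s) = S t ∘ S s)
    (C K : ℝ) (hC : 1 ≤ C) (hK : 0 ≤ K)
    (hlip : ∀ t : ℝ, 0 ≤ t → ∀ x y : X,
      dist (S t x) (S t y) ≤ C * Real.exp (K * t) * dist x y)
    (B₁ B₂ B₃ : Set X) (hB₂ : B₂.Nonempty)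
    (C₁ C₂ : ℝ) (hC₁ : 0 ≤ C₁) (hC₂ : 0 ≤ C₂)
    (α₁ α₂ : ℝ) (hα₁ : 0 < α₁) (hα₂ : 0 < α₂)
    (h12 : ∀ t : ℝ, 0 ≤ t → ∀ x ∈ B₁,
      Metric.infDist (S t x) B₂ ≤ C₁ * Real.exp (-α₁ * t))
    (h23 : ∀ t : ℝ, 0 ≤ t → ∀ x ∈ B₂,
      Metric.infDist (S t x) B₃ ≤ C₂ * Real.exp (-α₂ * t)) :
    ∀ t : ℝ, 0 ≤ t → ∀ x ∈ B₁,
      Metric.infDist (S t x) B₃ ≤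
        (C * C₁ + C₂) * Real.exp (-(α₁ * α₂ / (K + α₁ + α₂)) * t) :=
  stmt_13_general hsem (zero_le_one.trans hC) hlip hB₂ hα₁ (add_nonneg hK hα₂.le) h12 h23
end
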